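/- Let K be a field, R = K[x_1,…,x_n], and V_1,…,V_m a collection of K-subspaces of the space R_1 of linear forms. Then the K-subalgebra A(V) of R generated by the elements of the product space V_1·V_2·⋯·V_m is a Koszul algebra. -/

import Mathlib

/-!
Let `L` be an algebraic closure of `K` (only its infiniteness matters), and for a space `W` of linear
forms over `L` and `a ∈ ℕ^m` consider the graded `A(V)`-module `M(W, a)` whose degree `k` part is the
image of `∏ V_i ^ (a_i + k)` in `L[x] / (W)`, for `k ≥ 0`. Thus `M(0, 0)` is `A(V)` with scalars
extended, and `M(0, 1)` is its irrelevant ideal, shifted to start in degree `0`. The heart of the proof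
is that all `M(W, a)` with `W` obtained from generic choices have a linear resolution, that is,
`Tor_i(M(W, a), K)_d = 0` for `d ≠ i`. Here `Tor` is computed from a given minimal free resolution of
the residue field, with its matrices read in `L[x]`: see `bcD`, `Van`, `Lin`.

The commutative algebra input is `exists_generic`: if `V_i ⊄ W`, then for a general `x ∈ V_i` and
`a_i ≥ 1` multiplication by `x` gives an exact sequence
`0 → M(W, a - e_i) → M(W, a) → M(W + ⟨x⟩, a) → 0`. It follows from a description of
`∏ V_i ^ b_i` modulo `(W)` as the forms of degree `∑ b_i` in all the ideals
`(∑_{i ∈ C} V_i) ^ (∑_{i ∈ C} b_i) + (W)` (`primary`), together with colon computations for such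
ideals (`colon_notMem`, `colon_mem`).

The homological input is the long exact sequence, in the form of `van_mid` and `van_right`. In
`lin_all`, by induction on the homological degree `s`, the codimension of `W` and `∑ a_i`, linearity of
`M(W, 0)` up to `s` implies that of every `M(W, a)`: the sequence above reduces `a` to `a - e_i` and to
`W + ⟨x⟩`, and the sequence `0 → M(W, 1 - e_i)(-1) → M(W, 0) → M(W + ⟨x⟩, 0) → 0` shows that
`M(W + ⟨x⟩, 0)` is linear up to `s`, since `M(W, 1 - e_i)` is only needed up to `s - 1`
(`lin_right`). As `M(0, 0)` is free, linearity holds for `M(0, a)`, in particular for the irrelevant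
ideal, and comparing with minimality kills all Betti numbers off the diagonal (`betti_eq_zero`).
-/



open DirectSum

universe u v w

/-- A standard graded structure on a commutative `K`-algebra `R`:
an internal direct sum decomposition `R = ⊕_{i∈ℤ} R_i` with `R_i = 0` for `i < 0`,
`R_0 = K·1`, `R_i · R_j = R_{i+j}` and `dim_K R_1 < ∞`. -/
structure StdGrading (K : Type u) [Field K] (R : Type v) [CommRing R] [Algebra K R] :
    Type v where
  gr : ℤ → Submodule K R
  internal : DirectSum.IsInternal gr
  negBot : ∀ i : ℤ, i < 0 → gr i = ⊥
  zeroEq : gr 0 = Submodule.span K {(1 : R)}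
  mulEq : ∀ i j : ℤ, 0 ≤ i → 0 ≤ j → gr i * gr j = gr (i + j)
  finOne : Module.Finite K (gr 1)

variable {K : Type u} [Field K] {R : Type v} [CommRing R] [Algebra K R]

/-- The irrelevant maximal homogeneous ideal `m_R = ⊕_{i>0} R_i`. -/
def StdGrading.maxIdeal (A : StdGrading K R) : Ideal R :=
  Ideal.span {x : R | ∃ i : ℤ, 0 < i ∧ x ∈ A.gr i}

/-- `g` is a grading making the `R`-module `M` into a graded module over the
standard graded algebra `(R, A)`. -/
def IsGradedModule (A : StdGrading K R) {M : Type w} [AddCommGroup M] [Module K M]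
    [Module R M] [IsScalarTower K R M] (g : ℤ → Submodule K M) : Prop :=
  DirectSum.IsInternal g ∧
    ∀ (i j : ℤ), ∀ r ∈ A.gr i, ∀ x ∈ g j, r • x ∈ g (i + j)

/-- The graded free `R`-module with `β i j` basis elements of (internal) degree `j`,
in homological position `i`. -/
abbrev FreeMod (R : Type v) [CommRing R] (β : ℕ → ℤ → ℕ) (i : ℕ) : Type v :=
  ((j : ℤ) × Fin (β i j)) →₀ R

/-- The degree-`d` graded piece of the graded free module `FreeMod R β i`. -/
def freeGr (A : StdGrading K R) (β : ℕ → ℤ → ℕ) (i : ℕ) (d : ℤ) :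
    Submodule K (FreeMod R β i) where
  carrier := {f | ∀ p : (j : ℤ) × Fin (β i j), f p ∈ A.gr (d - p.1)}
  add_mem' := fun hf hg p => by
    simpa using add_mem (hf p) (hg p)
  zero_mem' := fun p => by simp
  smul_mem' := fun c f hf p => by
    simpa using Submodule.smul_mem _ c (hf p)

/-- A minimal graded free resolution of the graded `R`-module `(M, g)` whose graded
Betti numbers are given by the table `β`: the maps are degree-zero maps of graded
modules, the complex is exact, and the differentials map into `m_R·F`. -/
structure MinFreeRes (A : StdGrading K R) {M : Type w} [AddCommGroup M] [Module K M]
    [Module R M] [IsScalarTower K R M] (g : ℤ → Submodule K M) (β : ℕ → ℤ → ℕ) :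
    Type (max v w) where
  eps : FreeMod R β 0 →ₗ[R] M
  d : (i : ℕ) → FreeMod R β (i + 1) →ₗ[R] FreeMod R β i
  eps_surjective : Function.Surjective eps
  exact_eps : Function.Exact ⇑(d 0) ⇑eps
  exact_d : ∀ i : ℕ, Function.Exact ⇑(d (i + 1)) ⇑(d i)
  graded_eps : ∀ dg : ℤ, ∀ f ∈ freeGr A β 0 dg, eps f ∈ g dg
  graded_d : ∀ (i : ℕ) (dg : ℤ), ∀ f ∈ freeGr A β (i + 1) dg, d i f ∈ freeGr A β i dg
  minimal : ∀ (i : ℕ) (f : FreeMod R β (i + 1)) (p : (j : ℤ) × Fin (β i j)),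
    d i f p ∈ A.maxIdeal

/-- `β` is the table of graded Betti numbers of the graded module `(M, g)`,
i.e. there is a minimal graded free resolution realizing it. -/
def HasBettiTable (A : StdGrading K R) {M : Type w} [AddCommGroup M] [Module K M]
    [Module R M] [IsScalarTower K R M] (g : ℤ → Submodule K M) (β : ℕ → ℤ → ℕ) : Prop :=
  Nonempty (MinFreeRes A g β)

/-- The grading on the residue field `K = R/m_R` of a standard graded algebra. -/
def resGr (A : StdGrading K R) : ℤ → Submodule K (R ⧸ A.maxIdeal) := fun d =>
  (A.gr d).map ((A.maxIdeal.mkQ).restrictScalars K)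

/-- `R` is a Koszul algebra: the minimal graded free resolution of the residue field
`K = R/m_R` is linear, i.e. `β_{ij}(K) = 0` for `j ≠ i`. -/
def IsKoszul (A : StdGrading K R) : Prop :=
  ∀ β : ℕ → ℤ → ℕ, HasBettiTable A (resGr A) β →
    ∀ (i : ℕ) (j : ℤ), j ≠ (i : ℤ) → β i j = 0

namespace ProdLin

open MvPolynomial

variable {L : Type u} [Field L] {n m : ℕ}

/-! ### Ideals generated by linear forms -/

/-- The ideal generated by a space of polynomials. -/
noncomputable def idl (W : Submodule L (MvPolynomial (Fin n) L)) : Ideal (MvPolynomial (Fin n) L) :=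
  Ideal.span (W : Set (MvPolynomial (Fin n) L))

theorem mem_idl {W : Submodule L (MvPolynomial (Fin n) L)} {w} (h : w ∈ W) : w ∈ idl W :=
  Ideal.subset_span h

theorem idl_mono {W W' : Submodule L (MvPolynomial (Fin n) L)} (h : W ≤ W') : idl W ≤ idl W' :=
  Ideal.span_mono h

theorem idl_sup (U W : Submodule L (MvPolynomial (Fin n) L)) :
    idl (U ⊔ W) = idl U ⊔ idl W := by
  apply le_antisymm
  · refine Ideal.span_le.2 fun x hx => ?_
    obtain ⟨u, hu, w, hw, rfl⟩ := Submodule.mem_sup.1 hx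
    exact add_mem (Ideal.mem_sup_left (mem_idl hu)) (Ideal.mem_sup_right (mem_idl hw))
  · exact sup_le (idl_mono le_sup_left) (idl_mono le_sup_right)

theorem idl_bot : idl (⊥ : Submodule L (MvPolynomial (Fin n) L)) = ⊥ := by
  simp [idl]

theorem sup_pow_le' {R : Type*} [CommRing R] (I J : Ideal R) (k : ℕ) :
    (I ⊔ J) ^ k ≤ I ^ k ⊔ J := by
  induction k with
  | zero => simp
  | succ k ih =>
    rw [pow_succ, pow_succ]
    refine (Ideal.mul_mono_left ih).trans ?_
    rw [Ideal.sup_mul, Ideal.mul_sup]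
    have h1 : I ^ k * J ≤ J := Ideal.mul_le_right
    have h2 : J * (I ⊔ J) ≤ J := Ideal.mul_le_left
    exact sup_le (sup_le le_sup_left (h1.trans le_sup_right)) (h2.trans le_sup_right)

/-- Every subspace is the kernel of a projection `p`, and `v - p v` lies in it. -/
theorem exists_proj {E : Type*} [AddCommGroup E] [Module L E] (S : Submodule L E) :
    ∃ p : E →ₗ[L] E, (∀ v ∈ S, p v = 0) ∧ ∀ v, v - p v ∈ S := by
  obtain ⟨f, hf⟩ := LinearMap.exists_leftInverse_of_injective S.subtype S.ker_subtype
  refine ⟨LinearMap.id - S.subtype ∘ₗ f, fun v hv => ?_, fun v => ?_⟩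
  · have := LinearMap.congr_fun hf ⟨v, hv⟩
    simp at this
    simp [this]
  · simp

theorem lin_eq_span : homogeneousSubmodule (Fin n) L 1 = Submodule.span L (Set.range X) := by
  exact homogeneousSubmodule_one_eq_span_X

theorem lin_ext {M : Type*} [AddCommGroup M] [Module L M]
    {f g : MvPolynomial (Fin n) L →ₗ[L] M} (h : ∀ i, f (X i) = g (X i)) {v}
    (hv : v ∈ homogeneousSubmodule (Fin n) L 1) : f v = g v := by
  rw [lin_eq_span] at hv
  exact LinearMap.eqOn_span' (by rintro _ ⟨i, rfl⟩; exact h i) hv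

/-- A substitution homomorphism computing the filtration of `R / (W)` by the powers of `(U)`.
It marks a complement of `W` in `U + W` with an extra variable `T`, kills `W`, and keeps a complement
of `U + W`; membership in `(U)^k + (W)` becomes divisibility by `T^k`. -/
theorem exists_psi {U W : Submodule L (MvPolynomial (Fin n) L)}
    (hU : U ≤ homogeneousSubmodule (Fin n) L 1) (hW : W ≤ homogeneousSubmodule (Fin n) L 1) :
    ∃ ψ : MvPolynomial (Fin n) L →ₐ[L] Polynomial (MvPolynomial (Fin n) L),
      (∀ k r, r ∈ idl U ^ k ⊔ idl W ↔ Polynomial.X ^ k ∣ ψ r) ∧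
      (∀ x ∈ homogeneousSubmodule (Fin n) L 1, x ∉ U ⊔ W → ¬ Polynomial.X ∣ ψ x) ∧
      (∀ x ∈ homogeneousSubmodule (Fin n) L 1, x ∈ U ⊔ W → x ∉ W →
        ∃ y, y ≠ 0 ∧ ψ x = Polynomial.X * Polynomial.C y) := by
  obtain ⟨p, hp0, hp⟩ := exists_proj (U ⊔ W)
  obtain ⟨pw, hw0, hpw⟩ := exists_proj W
  let q := pw ∘ₗ (LinearMap.id - p)
  have hq0 : ∀ v ∈ W, q v = 0 := fun v hv => by
    simp [q, hp0 v (Submodule.mem_sup_right hv), hw0 v hv]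
  have hq : ∀ v, v - p v - q v ∈ W := fun v => hpw _
  have hqU : ∀ v, q v ∈ U ⊔ W := fun v => by
    have := sub_mem (hp v) (Submodule.mem_sup_right (S := U) (hq v))
    simpa using this
  let ψ : MvPolynomial (Fin n) L →ₐ[L] Polynomial (MvPolynomial (Fin n) L) :=
    aeval fun i => Polynomial.C (p (X i)) + Polynomial.X * Polynomial.C (q (X i))
  have hψ : ∀ v ∈ homogeneousSubmodule (Fin n) L 1,
      ψ v = Polynomial.C (p v) + Polynomial.X * Polynomial.C (q v) := by
    intro v hv
    let c : MvPolynomial (Fin n) L →ₗ[L] Polynomial (MvPolynomial (Fin n) L) :=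
      (Algebra.ofId _ _ : MvPolynomial (Fin n) L →ₐ[MvPolynomial (Fin n) L] _).toLinearMap.restrictScalars L
    have := lin_ext (f := ψ.toLinearMap)
      (g := c ∘ₗ p + (LinearMap.mulLeft L Polynomial.X) ∘ₗ c ∘ₗ q) (fun i => by
        simp [ψ, c, Algebra.ofId]) hv
    simpa [c, Algebra.ofId] using this
  -- The coefficient of `T^k` in `ψ r` lies in the `k`-th power of the ideal `(U + W)`.
  have hrees : ∀ r, ψ r ∈ reesAlgebra (idl (U ⊔ W)) := by
    intro r
    have : (ψ : MvPolynomial (Fin n) L →ₐ[L] _).range ≤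
        (reesAlgebra (idl (U ⊔ W))).restrictScalars L := by
      rw [← Algebra.map_top, ← MvPolynomial.adjoin_range_X, AlgHom.map_adjoin, Algebra.adjoin_le_iff]
      rintro _ ⟨_, ⟨i, rfl⟩, rfl⟩
      rw [hψ _ (isHomogeneous_X _ _)]
      intro j
      rcases j with _ | _ | j
      · simp
      · simpa [Polynomial.coeff_C] using mem_idl (hqU _)
      · simp [Polynomial.coeff_C]
    exact this ⟨r, rfl⟩
  -- Setting `T = 1` recovers `r` modulo `(W)`.
  have heval : ∀ r, r - Polynomial.eval 1 (ψ r) ∈ idl W := by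
    intro r
    let e : Polynomial (MvPolynomial (Fin n) L) →ₐ[L] MvPolynomial (Fin n) L :=
      (Polynomial.aeval (R := MvPolynomial (Fin n) L) (1 : MvPolynomial (Fin n) L)).restrictScalars L
    have : (Ideal.Quotient.mkₐ L (idl W)) = (Ideal.Quotient.mkₐ L (idl W)).comp (e.comp ψ) := by
      apply MvPolynomial.algHom_ext
      intro i
      have h := mem_idl (hq (X i))
      rw [← Ideal.Quotient.eq_zero_iff_mem] at h
      simp [e, hψ _ (isHomogeneous_X _ _)] at h ⊢
      linear_combination h
    have h2 := AlgHom.congr_fun this r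
    rw [← Ideal.Quotient.eq]
    simpa [e, Polynomial.aeval_def] using h2
  refine ⟨ψ, fun k r => ⟨fun h => ?_, fun h => ?_⟩, fun x hx hxU hd => ?_, fun x hx hxU hxW => ?_⟩
  · have key : idl U ^ k ⊔ idl W ≤ (Ideal.span {(Polynomial.X : Polynomial (MvPolynomial (Fin n) L)) ^ k}).comap ψ := by
      refine sup_le ?_ ?_
      · rw [← Ideal.span_singleton_pow]
        refine le_trans ?_ (Ideal.le_comap_pow _ k)
        refine Ideal.pow_right_mono (Ideal.span_le.2 fun u hu => ?_) k
        rw [SetLike.mem_coe, Ideal.mem_comap, Ideal.mem_span_singleton, hψ u (hU hu),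
          hp0 u (Submodule.mem_sup_left hu)]
        simp
      · refine Ideal.span_le.2 fun u hu => ?_
        rw [SetLike.mem_coe, Ideal.mem_comap, hψ u (hW hu),
          hp0 u (Submodule.mem_sup_right hu), hq0 u hu]
        simp
    exact Ideal.mem_span_singleton.1 (key h)
  · have : Polynomial.eval 1 (ψ r) ∈ idl U ^ k ⊔ idl W := by
      rw [Polynomial.eval_eq_sum_range]
      refine sum_mem fun j _ => ?_
      rw [one_pow, mul_one]
      by_cases hj : j < k
      · rw [Polynomial.X_pow_dvd_iff.1 h j hj]; exact zero_mem _
      · have h1 := hrees r j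
        refine sup_pow_le' _ _ _ (?_ : _ ∈ (idl U ⊔ idl W) ^ k)
        rw [← idl_sup]
        exact Ideal.pow_le_pow_right (not_lt.1 hj) h1
    simpa using add_mem (Ideal.mem_sup_right (S := idl U ^ k) (heval r)) this
  · rw [hψ x hx, Polynomial.X_dvd_iff] at hd
    simp at hd
    exact hxU (by simpa [hd] using hp x)
  · have h0 := hp0 x hxU
    refine ⟨q x, fun h => hxW ?_, ?_⟩
    · simpa [h0, h] using hq x
    · rw [hψ x hx, h0]; simp

/-- A linear form outside `U + W` is a nonzerodivisor modulo `(U)^k + (W)`. -/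
theorem colon_notMem {U W : Submodule L (MvPolynomial (Fin n) L)}
    (hU : U ≤ homogeneousSubmodule (Fin n) L 1) (hW : W ≤ homogeneousSubmodule (Fin n) L 1)
    {x r : MvPolynomial (Fin n) L} {k : ℕ} (hx : x ∈ homogeneousSubmodule (Fin n) L 1)
    (hxU : x ∉ U ⊔ W) (h : x * r ∈ idl U ^ k ⊔ idl W) : r ∈ idl U ^ k ⊔ idl W := by
  obtain ⟨ψ, h1, h2, -⟩ := exists_psi hU hW
  rw [h1, map_mul] at h
  rw [h1]
  exact Polynomial.prime_X.pow_dvd_of_dvd_mul_left k (h2 x hx hxU) h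

/-- For a linear form `x ∈ U + W` outside `W`, the colon ideal of `(U)^(k+1) + (W)` by `x` is
contained in `(U)^k + (W)`. -/
theorem colon_mem {U W : Submodule L (MvPolynomial (Fin n) L)}
    (hU : U ≤ homogeneousSubmodule (Fin n) L 1) (hW : W ≤ homogeneousSubmodule (Fin n) L 1)
    {x r : MvPolynomial (Fin n) L} {k : ℕ} (hx : x ∈ homogeneousSubmodule (Fin n) L 1)
    (hxU : x ∈ U ⊔ W) (hxW : x ∉ W) (h : x * r ∈ idl U ^ (k + 1) ⊔ idl W) :
    r ∈ idl U ^ k ⊔ idl W := by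
  obtain ⟨ψ, h1, -, h3⟩ := exists_psi hU hW
  obtain ⟨y, hy, hxy⟩ := h3 x hx hxU hxW
  rw [h1, map_mul, hxy, pow_succ', mul_assoc] at h
  rw [h1]
  refine Polynomial.prime_X.pow_dvd_of_dvd_mul_left k ?_
    ((mul_dvd_mul_iff_left Polynomial.X_ne_zero).1 h)
  rw [Polynomial.X_dvd_iff]
  simpa using hy

theorem colon_idl {W : Submodule L (MvPolynomial (Fin n) L)}
    (hW : W ≤ homogeneousSubmodule (Fin n) L 1)
    {x r : MvPolynomial (Fin n) L} (hx : x ∈ homogeneousSubmodule (Fin n) L 1)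
    (hxW : x ∉ W) (h : x * r ∈ idl W) : r ∈ idl W := by
  simpa [idl_bot] using colon_notMem (U := ⊥) (k := 1) bot_le hW hx (by simpa using hxW)
    (by simpa [idl_bot] using h)

theorem idl_pow_sup_mono {U : Submodule L (MvPolynomial (Fin n) L)}
    {J : Ideal (MvPolynomial (Fin n) L)} {k l : ℕ} (h : k ≤ l) {r}
    (hr : r ∈ idl U ^ l ⊔ J) : r ∈ idl U ^ k ⊔ J := by
  have : idl U ^ l ⊔ J ≤ idl U ^ k ⊔ J := sup_le_sup_right (Ideal.pow_le_pow_right h) J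
  exact this hr

theorem homogeneousComponent_lin_mul {x : MvPolynomial (Fin n) L}
    (hx : x ∈ homogeneousSubmodule (Fin n) L 1) (r : MvPolynomial (Fin n) L) (d : ℕ) :
    homogeneousComponent (d + 1) (x * r) = x * homogeneousComponent d r := by
  conv_lhs => rw [← sum_homogeneousComponent r, Finset.mul_sum, map_sum]
  have key : ∀ i, homogeneousComponent (d + 1) (x * homogeneousComponent i r) =
      if i = d then x * homogeneousComponent i r else 0 := by
    intro i
    have h : x * homogeneousComponent i r ∈ homogeneousSubmodule (Fin n) L (i + 1) := by
      have := hx.mul (homogeneousComponent_isHomogeneous i r)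
      rwa [add_comm] at this
    rw [homogeneousComponent_of_mem h]
    simp [eq_comm]
  simp only [key, Finset.sum_ite_eq', Finset.mem_range]
  split_ifs with h
  · rfl
  · rw [homogeneousComponent_eq_zero d r (by omega), mul_zero]

theorem homogeneousComponent_mem_idl {W : Submodule L (MvPolynomial (Fin n) L)}
    (hW : W ≤ homogeneousSubmodule (Fin n) L 1) {r : MvPolynomial (Fin n) L} (hr : r ∈ idl W)
    (d : ℕ) : homogeneousComponent d r ∈ idl W := by
  let _ := MvPolynomial.gradedAlgebra (σ := Fin n) (R := L)
  refine homogeneousComponent_mem_of_mem ?_ hr d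
  exact Ideal.homogeneous_span _ _ fun w hw => ⟨1, hW hw⟩

theorem pow_le_idl_pow (S : Submodule L (MvPolynomial (Fin n) L)) (d : ℕ) :
    S ^ d ≤ (idl S ^ d).restrictScalars L := by
  induction d with
  | zero => intro x _; simp
  | succ d ih =>
    rw [pow_succ, Submodule.mul_le]
    intro a ha b hb
    rw [Submodule.restrictScalars_mem, pow_succ]
    exact Ideal.mul_mem_mul (ih ha) (mem_idl hb)

theorem mem_of_homogeneous_of_lin_le {U W : Submodule L (MvPolynomial (Fin n) L)}
    (h : homogeneousSubmodule (Fin n) L 1 ≤ U ⊔ W) {d : ℕ} {g : MvPolynomial (Fin n) L}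
    (hg : g ∈ homogeneousSubmodule (Fin n) L d) : g ∈ idl U ^ d ⊔ idl W := by
  rw [← homogeneousSubmodule_one_pow] at hg
  have := pow_le_idl_pow _ d (pow_le_pow_left' h d hg)
  rw [Submodule.restrictScalars_mem, idl_sup] at this
  exact sup_pow_le' _ _ _ this

/-- In degrees below `d` the ideals `(U)^d + (W)` and `(W)` agree. -/
theorem mem_idl_of_low_degree {U W : Submodule L (MvPolynomial (Fin n) L)}
    (hU : U ≤ homogeneousSubmodule (Fin n) L 1) (hW : W ≤ homogeneousSubmodule (Fin n) L 1)
    {d e : ℕ} (hed : e < d) {g : MvPolynomial (Fin n) L}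
    (hg : g ∈ homogeneousSubmodule (Fin n) L e) (h : g ∈ idl U ^ d ⊔ idl W) : g ∈ idl W := by
  obtain ⟨u, hu, w, hw, rfl⟩ := Submodule.mem_sup.1 h
  have h1 : homogeneousComponent e u = 0 := by
    have h2 : u ∈ idealOfVars (Fin n) L ^ d := by
      refine Ideal.pow_right_mono (Ideal.span_le.2 fun x hx => ?_) d hu
      have := hU hx
      rw [lin_eq_span] at this
      exact Submodule.span_le_restrictScalars L (MvPolynomial (Fin n) L) _ this
    ext s
    rw [coeff_homogeneousComponent, coeff_zero]
    split_ifs with hs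
    · exact (mem_pow_idealOfVars_iff' _ _).1 h2 s (by omega)
    · rfl
  have h3 := homogeneousComponent_mem_idl hW hw e
  rw [← homogeneousComponent_eq_self hg, map_add, h1, zero_add]
  exact h3

/-- Over an infinite field, a subspace is not covered by finitely many subspaces not containing it. -/
theorem exists_avoid [Infinite L] {M : Type*} [AddCommGroup M] [Module L M] (E : Submodule L M)
    {ι : Type*} [Finite ι] (S : ι → Submodule L M) (h : ∀ i, ¬ E ≤ S i) :
    ∃ x ∈ E, ∀ i, x ∉ S i := by
  by_contra! hc
  have : ⋃ i, ((S i).comap E.subtype : Set E) = Set.univ := by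
    refine Set.eq_univ_of_forall fun x => ?_
    obtain ⟨i, hi⟩ := hc x x.2
    exact Set.mem_iUnion.2 ⟨i, hi⟩
  obtain ⟨i, hi⟩ := Subspace.exists_eq_top_of_iUnion_eq_univ this
  exact h i fun x hx => by
    have : (⟨x, hx⟩ : E) ∈ (S i).comap E.subtype := hi ▸ Submodule.mem_top
    exact this

/-- Induction on the codimension of a space of linear forms. -/
theorem codim_induction {P : Submodule L (MvPolynomial (Fin n) L) → Prop}
    (step : ∀ W ≤ homogeneousSubmodule (Fin n) L 1,
      (∀ W' ≤ homogeneousSubmodule (Fin n) L 1, W < W' → P W') → P W) :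
    ∀ W ≤ homogeneousSubmodule (Fin n) L 1, P W := by
  have hfin : Module.Finite L (homogeneousSubmodule (Fin n) L 1) :=
    Module.Finite.iff_fg.2 (homogeneousSubmodule_fg _ _ 1)
  intro W
  induction hk : Module.finrank L (homogeneousSubmodule (Fin n) L 1) - Module.finrank L W
    using Nat.strong_induction_on generalizing W with
  | _ k ih =>
    intro hW
    refine step W hW fun W' hW' hlt => ih _ ?_ W' rfl hW'
    have : FiniteDimensional L W' := Submodule.finiteDimensional_of_le hW'
    have h1 := Submodule.finrank_lt_finrank_of_lt hlt
    have h2 := Submodule.finrank_mono hW'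
    omega

/-! ### Products of spaces of linear forms -/

/-- The product space `∏ V_i ^ b_i`. -/
noncomputable def Vpow (V : Fin m → Submodule L (MvPolynomial (Fin n) L)) (b : Fin m → ℕ) :
    Submodule L (MvPolynomial (Fin n) L) := ∏ i, V i ^ b i

/-- The sum of the spaces `V_i`, `i ∈ C`. -/
noncomputable def VC (V : Fin m → Submodule L (MvPolynomial (Fin n) L)) (C : Finset (Fin m)) :
    Submodule L (MvPolynomial (Fin n) L) := ⨆ i ∈ C, V i

theorem Vpow_add (V : Fin m → Submodule L (MvPolynomial (Fin n) L)) (b c : Fin m → ℕ) :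
    Vpow V (b + c) = Vpow V b * Vpow V c := by
  simp [Vpow, pow_add, Finset.prod_mul_distrib]

theorem Vpow_single (V : Fin m → Submodule L (MvPolynomial (Fin n) L)) (i : Fin m) :
    Vpow V (Pi.single i 1) = V i := by
  rw [Vpow, Finset.prod_eq_single i]
  · simp
  · intro j _ hj; simp [hj]
  · simp

theorem VC_le {V : Fin m → Submodule L (MvPolynomial (Fin n) L)}
    (hV : ∀ i, V i ≤ homogeneousSubmodule (Fin n) L 1) (C : Finset (Fin m)) :
    VC V C ≤ homogeneousSubmodule (Fin n) L 1 := iSup₂_le fun i _ => hV i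

theorem Vpow_hom {V : Fin m → Submodule L (MvPolynomial (Fin n) L)}
    (hV : ∀ i, V i ≤ homogeneousSubmodule (Fin n) L 1) (b : Fin m → ℕ) :
    Vpow V b ≤ homogeneousSubmodule (Fin n) L (∑ i, b i) := by
  rw [← homogeneousSubmodule_one_pow, ← Finset.prod_pow_eq_pow_sum]
  exact Finset.prod_le_prod' fun i _ => pow_le_pow_left' (hV i) _

theorem Vpow_le_idl (V : Fin m → Submodule L (MvPolynomial (Fin n) L)) (b : Fin m → ℕ)
    (C : Finset (Fin m)) :
    Vpow V b ≤ (idl (VC V C) ^ (∑ i ∈ C, b i)).restrictScalars L := by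
  classical
  have h1 : ∏ i ∈ C, V i ^ b i ≤ VC V C ^ (∑ i ∈ C, b i) := by
    rw [← Finset.prod_pow_eq_pow_sum]
    exact Finset.prod_le_prod' fun i hi =>
      pow_le_pow_left' (le_iSup₂_of_le (f := fun i (_ : i ∈ C) => V i) i hi le_rfl) _
  rw [Vpow, ← Finset.prod_mul_prod_compl C, Submodule.mul_le]
  intro a ha c _
  exact Ideal.mul_mem_right _ _ (pow_le_idl_pow _ _ (h1 ha))

/-- The ideal generated by `W`, as a vector space. -/
noncomputable def IW (W : Submodule L (MvPolynomial (Fin n) L)) :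
    Submodule L (MvPolynomial (Fin n) L) := (idl W).restrictScalars L

theorem mem_IW {W : Submodule L (MvPolynomial (Fin n) L)} {r} : r ∈ IW W ↔ r ∈ idl W := Iff.rfl

theorem mem_idl_sup_span {W : Submodule L (MvPolynomial (Fin n) L)} {x r} :
    r ∈ idl (W ⊔ Submodule.span L {x}) ↔ ∃ w ∈ idl W, ∃ h, r = w + x * h := by
  have : idl (Submodule.span L {x}) = Ideal.span {x} := by
    refine le_antisymm (Ideal.span_le.2 fun y hy => ?_) (Ideal.span_le.2 ?_)
    · obtain ⟨a, rfl⟩ := Submodule.mem_span_singleton.1 hy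
      rw [SetLike.mem_coe, MvPolynomial.smul_eq_C_mul]
      exact Ideal.mul_mem_left _ _ (Ideal.mem_span_singleton_self x)
    · simpa using mem_idl (Submodule.mem_span_singleton_self x)
  rw [idl_sup, this, Submodule.mem_sup]
  constructor
  · rintro ⟨w, hw, y, hy, rfl⟩
    obtain ⟨h, rfl⟩ := Ideal.mem_span_singleton.1 hy
    exact ⟨w, hw, h, rfl⟩
  · rintro ⟨w, hw, h, rfl⟩
    exact ⟨w, hw, _, Ideal.mem_span_singleton.2 ⟨h, rfl⟩, rfl⟩

/-- A form `g` of degree `∑ b_i` lies in `∏ V_i ^ b_i + (W)` as soon as it lies in each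
`(∑_{i ∈ C} V_i)^(∑_{i ∈ C} b_i) + (W)`. The induction is on the degree and the codimension of `W`:
modulo a general linear form `x` the claim holds, so `g = p + w + x h`; the factor `h` satisfies the
conditions for every exponent vector one step below `b`, because `x` avoids all proper `V_C + W`. -/
theorem primary [Infinite L] {V : Fin m → Submodule L (MvPolynomial (Fin n) L)}
    (hV : ∀ i, V i ≤ homogeneousSubmodule (Fin n) L 1) (N : ℕ) :
    ∀ W ≤ homogeneousSubmodule (Fin n) L 1, ∀ b : Fin m → ℕ, ∑ i, b i = N →
      ∀ g ∈ homogeneousSubmodule (Fin n) L N,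
        (∀ C : Finset (Fin m), g ∈ idl (VC V C) ^ (∑ i ∈ C, b i) ⊔ idl W) →
        g ∈ Vpow V b ⊔ IW W := by
  induction N with
  | zero =>
    intro W _ b hb g hg _
    have hb0 : b = 0 := by
      ext i
      exact Finset.sum_eq_zero_iff.1 hb i (Finset.mem_univ i)
    refine Submodule.mem_sup_left ?_
    have := homogeneousSubmodule_one_pow (σ := Fin n) (R := L) 0
    rw [pow_zero] at this
    rw [← this] at hg
    simpa [hb0, Vpow] using hg
  | succ N ihN =>
    refine codim_induction fun W hW ih b hb g hg hC => ?_
    by_cases hlin : homogeneousSubmodule (Fin n) L 1 ≤ W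
    · refine Submodule.mem_sup_right (mem_IW.2 ?_)
      have := mem_of_homogeneous_of_lin_le (U := ⊥) (W := W) (by simpa using hlin) hg
      simpa [idl_bot] using this
    obtain ⟨x, hx, hxC⟩ := exists_avoid (homogeneousSubmodule (Fin n) L 1)
      (fun C : {C : Finset (Fin m) // ¬ homogeneousSubmodule (Fin n) L 1 ≤ VC V C ⊔ W} =>
        VC V C.1 ⊔ W) (fun C => C.2)
    have hxW : x ∉ W := by
      have := hxC ⟨∅, by simpa [VC] using hlin⟩
      simpa [VC] using this
    have hW' : W ⊔ Submodule.span L {x} ≤ homogeneousSubmodule (Fin n) L 1 :=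
      sup_le hW ((Submodule.span_singleton_le_iff_mem _ _).2 hx)
    have hg' := ih _ hW' (left_lt_sup.2 fun h => hxW (h (Submodule.mem_span_singleton_self x)))
      b hb g hg fun C => sup_le_sup_left (idl_mono le_sup_left) _ (hC C)
    obtain ⟨p, hp, t, ht, hpt⟩ := Submodule.mem_sup.1 hg'
    obtain ⟨w0, hw0, h0, rfl⟩ := mem_idl_sup_span.1 (mem_IW.1 ht)
    set h := homogeneousComponent N h0 with hh
    have hhom : h ∈ homogeneousSubmodule (Fin n) L N := homogeneousComponent_mem N h0
    set w := homogeneousComponent (N + 1) w0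
    have hw : w ∈ idl W := homogeneousComponent_mem_idl hW hw0 _
    have hgp : g = p + (w + x * h) := by
      have := congrArg (homogeneousComponent (N + 1)) hpt
      rw [homogeneousComponent_eq_self hg, map_add, map_add, homogeneousComponent_lin_mul hx,
        homogeneousComponent_eq_self (hb ▸ Vpow_hom hV b hp)] at this
      exact this.symm
    -- By genericity of `x`, the factor `h` inherits the conditions for all `C` with
    -- `V_C + W` proper.
    have hhC : ∀ C, ¬ homogeneousSubmodule (Fin n) L 1 ≤ VC V C ⊔ W →
        h ∈ idl (VC V C) ^ (∑ i ∈ C, b i) ⊔ idl W := by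
      intro C hCl
      refine colon_notMem (VC_le hV C) hW hx (hxC ⟨C, hCl⟩) ?_
      have h1 : x * h = g - p - w := by rw [hgp]; ring
      rw [h1]
      exact sub_mem (sub_mem (hC C) (Submodule.mem_sup_left (Vpow_le_idl V b C hp)))
        (Submodule.mem_sup_right hw)
    have hi : ∀ i, b i ≠ 0 → ∀ v ∈ V i, v * h ∈ Vpow V b ⊔ IW W := by
      intro i hbi v hv
      obtain ⟨c, hc⟩ : ∃ c : Fin m → ℕ, b = Pi.single i 1 + c := by
        refine ⟨b - Pi.single i 1, (add_tsub_cancel_of_le ?_).symm⟩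
        intro j
        by_cases hj : j = i
        · subst hj; simpa using Nat.one_le_iff_ne_zero.2 hbi
        · simp [hj]
      have hcN : ∑ j, c j = N := by
        rw [hc] at hb
        simp [Finset.sum_add_distrib] at hb
        omega
      have := ihN W hW c hcN h hhom fun C => by
        by_cases hCl : homogeneousSubmodule (Fin n) L 1 ≤ VC V C ⊔ W
        · refine idl_pow_sup_mono ?_
            (mem_of_homogeneous_of_lin_le hCl hhom)
          rw [← hcN]
          exact Finset.sum_le_univ_sum_of_nonneg (fun _ => Nat.zero_le _)
        · refine idl_pow_sup_mono ?_ (hhC C hCl)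
          exact Finset.sum_le_sum fun j _ => by simp [hc]
      obtain ⟨a, ha, w', hw', hah⟩ := Submodule.mem_sup.1 this
      rw [← hah, mul_add, hc, Vpow_add, Vpow_single]
      exact add_mem (Submodule.mem_sup_left (Submodule.mul_mem_mul hv ha))
        (Submodule.mem_sup_right (Ideal.mul_mem_left _ _ hw'))
    -- Either the `V_i` with `b_i ≠ 0`, together with `W`, span all linear forms, so that `x` can be
    -- rewritten through them, or `h` has too low a degree and lies in `(W)`.
    have hxh : x * h ∈ Vpow V b ⊔ IW W := by
      set S : Finset (Fin m) := Finset.univ.filter fun i => b i ≠ 0 with hS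
      by_cases hSl : homogeneousSubmodule (Fin n) L 1 ≤ VC V S ⊔ W
      · obtain ⟨v, hv, w', hw', rfl⟩ := Submodule.mem_sup.1 (hSl hx)
        rw [add_mul]
        refine add_mem ?_ (Submodule.mem_sup_right (Ideal.mul_mem_right _ _ (mem_idl hw')))
        have : VC V S ≤ (Vpow V b ⊔ IW W).comap (LinearMap.mulRight L h) :=
          iSup₂_le fun i hiS v hv => hi i (by simpa [hS] using hiS) v hv
        exact this hv
      · have h1 := hhC S hSl
        have h2 : ∑ i ∈ S, b i = N + 1 := by
          rw [hS, Finset.sum_filter_ne_zero, hb]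
        rw [h2] at h1
        exact Submodule.mem_sup_right (Ideal.mul_mem_left _ _
          (mem_idl_of_low_degree (VC_le hV S) hW (Nat.lt_succ_self N) hhom h1))
    rw [hgp]
    exact add_mem (Submodule.mem_sup_left hp) (add_mem (Submodule.mem_sup_right hw) hxh)

/-- For a general `x ∈ V_i`, the intersection of `V_i · V^c` with `(W, x)` is `x · V^c` modulo
`(W)`. This gives the short exact sequences on which the homological argument runs. -/
theorem exists_generic [Infinite L] {V : Fin m → Submodule L (MvPolynomial (Fin n) L)}
    (hV : ∀ i, V i ≤ homogeneousSubmodule (Fin n) L 1)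
    {W : Submodule L (MvPolynomial (Fin n) L)} (hW : W ≤ homogeneousSubmodule (Fin n) L 1)
    (i : Fin m) (hi : ¬ V i ≤ W) :
    ∃ x ∈ V i, x ∉ W ∧ ∀ (c : Fin m → ℕ), ∀ v ∈ Vpow V (Pi.single i 1 + c),
      v ∈ idl (W ⊔ Submodule.span L {x}) →
      ∃ u ∈ Vpow V c, v - x * u ∈ idl W := by
  classical
  obtain ⟨x, hx, hxC⟩ := exists_avoid (V i)
      (fun C : {C : Finset (Fin m) // ¬ V i ≤ VC V C ⊔ W} => VC V C.1 ⊔ W) (fun C => C.2)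
  have hxW : x ∉ W := by
    have := hxC ⟨∅, by simpa [VC] using hi⟩
    simpa [VC] using this
  refine ⟨x, hx, hxW, fun c v hv hvx => ?_⟩
  obtain ⟨w0, hw0, h0, h⟩ := mem_idl_sup_span.1 hvx
  set N := ∑ j, c j with hN
  set u := homogeneousComponent N h0
  set w := homogeneousComponent (N + 1) w0
  have hw : w ∈ idl W := homogeneousComponent_mem_idl hW hw0 _
  have hvh : v ∈ homogeneousSubmodule (Fin n) L (N + 1) := by
    have := Vpow_hom hV _ hv
    simpa [Finset.sum_add_distrib, add_comm] using this
  have hvu : v = w + x * u := by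
    rw [← homogeneousComponent_eq_self hvh, h, map_add, homogeneousComponent_lin_mul (hV i hx)]
  have hu : u ∈ Vpow V c ⊔ IW W := by
    refine primary hV N W hW c rfl u (homogeneousComponent_mem _ _) fun C => ?_
    have hxu : x * u = v - w := by rw [hvu]; ring
    have hmem : ∀ C', x * u ∈ idl (VC V C') ^ (∑ j ∈ C', (Pi.single i 1 + c : Fin m → ℕ) j) ⊔ idl W := by
      intro C'
      rw [hxu]
      exact sub_mem (Submodule.mem_sup_left (Vpow_le_idl V _ C' hv)) (Submodule.mem_sup_right hw)
    by_cases hVC : V i ≤ VC V C ⊔ W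
    · refine colon_mem (VC_le hV C) hW (hV i hx) (hVC hx) hxW ?_
      have h1 := hmem (insert i C)
      have h2 : VC V (insert i C) ≤ VC V C ⊔ W := by
        rw [VC, Finset.iSup_insert]
        exact sup_le hVC le_sup_left
      have h3 : ∑ j ∈ C, c j + 1 ≤ ∑ j ∈ insert i C, (Pi.single i 1 + c : Fin m → ℕ) j := by
        simp only [Pi.add_apply, Finset.sum_add_distrib]
        have h4 : ∑ j ∈ insert i C, (Pi.single i 1 : Fin m → ℕ) j = 1 := by
          rw [Finset.sum_eq_single_of_mem i (Finset.mem_insert_self i C)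
            (fun j _ hj => by simp [hj])]
          simp
        have := Finset.sum_le_sum_of_subset (f := c) (Finset.subset_insert i C)
        omega
      refine (sup_le ?_ le_sup_right :
        idl (VC V (insert i C)) ^ _ ⊔ idl W ≤ idl (VC V C) ^ _ ⊔ idl W) h1
      refine (Ideal.pow_le_pow_right h3).trans ((Ideal.pow_right_mono (idl_mono h2) _).trans ?_)
      rw [idl_sup]
      exact sup_pow_le' _ _ _
    · refine colon_notMem (VC_le hV C) hW (hV i hx) (hxC ⟨C, hVC⟩) ?_
      refine idl_pow_sup_mono ?_ (hmem C)
      exact Finset.sum_le_sum fun j _ => by simp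
  obtain ⟨u', hu', w', hw', huw⟩ := Submodule.mem_sup.1 hu
  refine ⟨u', hu', ?_⟩
  have : v - x * u' = w + x * w' := by rw [hvu, ← huw]; ring
  rw [this]
  exact add_mem hw (Ideal.mul_mem_left _ _ hw')

/-! ### Homology with coefficients in subquotients -/

section Complex

theorem finsupp_choose {Y R S : Type*} [Zero R] [Zero S] {Q : Y → R → S → Prop}
    (h0 : ∀ p, Q p 0 0) (c : Y →₀ R) (h : ∀ p, ∃ y, Q p (c p) y) :
    ∃ e : Y →₀ S, ∀ p, Q p (c p) (e p) := by
  classical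
  choose f hf using h
  refine ⟨Finsupp.onFinset c.support (fun p => if c p = 0 then 0 else f p) ?_, fun p => ?_⟩
  · intro p hp
    simp only [Finsupp.mem_support_iff]
    intro h
    simp [h] at hp
  · by_cases hp : c p = 0
    · simpa [hp] using h0 p
    · simpa [hp] using hf p

variable {F R : Type*} [Field F] [CommRing R] [Algebra F R] {Y : ℕ → Type*}

/-- `c` is a cycle modulo `I` of the complex `D` in homological degree `i`; every chain in
degree `0` is a cycle. -/
def Cyc (D : ∀ i, (Y (i + 1) →₀ R) →ₗ[R] (Y i →₀ R)) (I : Ideal R) :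
    ∀ i, (Y i →₀ R) → Prop
  | 0, _ => True
  | i + 1, c => ∀ p, D i c p ∈ I

/-- Vanishing of the `i`-th homology in internal degree `d` of the complex `D` with coefficients
in the graded module with components `(g k + I) / I`. Here `deg i p` is the internal degree of
the basis vector `p`. -/
def Van (deg : ∀ i, Y i → ℤ) (D : ∀ i, (Y (i + 1) →₀ R) →ₗ[R] (Y i →₀ R))
    (g : ℤ → Submodule F R) (I : Ideal R) (i : ℕ) (d : ℤ) : Prop :=
  ∀ c : Y i →₀ R, (∀ p, c p ∈ g (d - deg i p)) → Cyc D I i c →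
    ∃ c' : Y (i + 1) →₀ R, (∀ q, c' q ∈ g (d - deg (i + 1) q)) ∧ ∀ p, (D i c' - c) p ∈ I

variable {deg : ∀ i, Y i → ℤ} {D : ∀ i, (Y (i + 1) →₀ R) →ₗ[R] (Y i →₀ R)}

theorem map_mem_ideal {Y Y' : Type*} (f : (Y →₀ R) →ₗ[R] (Y' →₀ R)) (I : Ideal R) (c : Y →₀ R)
    (hc : ∀ q, c q ∈ I) (p : Y') : f c p ∈ I := by
  rw [← Finsupp.sum_single c, Finsupp.sum, map_sum, Finsupp.finsetSum_apply]
  refine sum_mem fun q _ => ?_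
  have : Finsupp.single q (c q) = c q • Finsupp.single q (1 : R) := by simp
  rw [this, map_smul, Finsupp.smul_apply, smul_eq_mul]
  exact Ideal.mul_mem_right _ _ (hc q)

theorem Cyc.of_smul {I : Ideal R} {x : R} (hx : ∀ r, x * r ∈ I → r ∈ I)
    {i : ℕ} {e : Y i →₀ R} (h : Cyc D I i (x • e)) : Cyc D I i e := by
  cases i with
  | zero => trivial
  | succ i =>
    intro p
    have := h p
    rw [map_smul] at this
    exact hx _ this

theorem Cyc.congr {I J : Ideal R} (hIJ : I ≤ J) {i : ℕ} {c e : Y i →₀ R}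
    (h : Cyc D I i c) (hce : ∀ p, (e - c) p ∈ J) : Cyc D J i e := by
  cases i with
  | zero => trivial
  | succ i =>
    intro p
    have h1 := map_mem_ideal (D i) J _ hce p
    rw [map_sub, Finsupp.sub_apply] at h1
    simpa using add_mem h1 (hIJ (h p))

theorem Cyc.sub_boundary {I : Ideal R} (hDD : ∀ i c, D i (D (i + 1) c) = 0) {i : ℕ}
    {c : Y i →₀ R} (h : Cyc D I i c) (b : Y (i + 1) →₀ R) : Cyc D I i (c - D i b) := by
  cases i with
  | zero => trivial
  | succ i =>
    intro p
    rw [map_sub, hDD, sub_zero]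
    exact h p

/-- Middle vanishing in the long exact homology sequence of
`0 → g'/I → g/I → g''/I' → 0`, the first map being multiplication by `x`. -/
theorem van_mid (hDD : ∀ i c, D i (D (i + 1) c) = 0) {g g' g'' : ℤ → Submodule F R}
    {I I' : Ideal R} {x : R} (hx : ∀ r, x * r ∈ I → r ∈ I) (hII' : I ≤ I')
    (hpres : ∀ i d (c : Y (i + 1) →₀ R), (∀ q, c q ∈ g (d - deg (i + 1) q)) →
      ∀ p, D i c p ∈ g (d - deg i p))
    (hxg : ∀ k, ∀ r ∈ g' k, x * r ∈ g k)
    (hex : ∀ k, ∀ r ∈ g k, r ∈ I' → ∃ u ∈ g' k, r - x * u ∈ I)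
    (hle : ∀ k, g k ≤ g'' k) (hsurj : ∀ k, ∀ r ∈ g'' k, ∃ s ∈ g k, s - r ∈ I')
    {i : ℕ} {d : ℤ} (h' : Van deg D g' I i d) (h'' : Van deg D g'' I' i d) :
    Van deg D g I i d := by
  intro c hc hcyc
  obtain ⟨b0, hb0, hb0c⟩ := h'' c (fun p => hle _ (hc p)) (hcyc.congr hII' (by simp))
  obtain ⟨b, hb⟩ := finsupp_choose
    (Q := fun q r s => s ∈ g (d - deg (i + 1) q) ∧ s - r ∈ I')
    (fun q => ⟨zero_mem _, by simp⟩) b0 (fun q => by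
      obtain ⟨s, hs, hs'⟩ := hsurj _ _ (hb0 q); exact ⟨s, hs, hs'⟩)
  have hcb : ∀ p, (c - D i b) p ∈ I' := by
    intro p
    have h1 := map_mem_ideal (D i) I' (b - b0) (fun q => (hb q).2) p
    have h2 := neg_mem (add_mem h1 (hb0c p))
    rw [← Finsupp.add_apply, ← Finsupp.neg_apply, map_sub] at h2
    simpa using h2
  obtain ⟨e, he⟩ := finsupp_choose
    (Q := fun p r u => u ∈ g' (d - deg i p) ∧ r - x * u ∈ I)
    (fun p => ⟨zero_mem _, by simp⟩) (c - D i b) (fun p => by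
      obtain ⟨s, hs, hs'⟩ := hex _ _
        (sub_mem (hc p) (hpres i d b (fun q => (hb q).1) p)) (hcb p)
      exact ⟨s, hs, hs'⟩)
  have hecyc : Cyc D I i e := by
    refine Cyc.of_smul hx ((hcyc.sub_boundary hDD b).congr le_rfl fun p => ?_)
    simpa using neg_mem (he p).2
  obtain ⟨e', he', hee⟩ := h' e (fun p => (he p).1) hecyc
  refine ⟨b + x • e', fun q => ?_, fun p => ?_⟩
  · exact add_mem (hb q).1 (hxg _ _ (he' q))
  · have h1 := sub_mem (Ideal.mul_mem_left I x (hee p)) (he p).2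
    have h2 : (D i (b + x • e') - c) p = x * (D i e' - e) p - ((c - D i b) p - x * e p) := by
      simp; ring
    rw [h2]; exact h1

/-- Vanishing at the right end of the long exact homology sequence of
`0 → g'/I → g/I → g''/I' → 0`, the first map being multiplication by `x`. -/
theorem van_right (hDD : ∀ i c, D i (D (i + 1) c) = 0) {g g' g'' : ℤ → Submodule F R}
    {I I' : Ideal R} {x : R} (hx : ∀ r, x * r ∈ I → r ∈ I) (hII' : I ≤ I') (hxI' : x ∈ I')
    (hpres : ∀ i d (c : Y (i + 1) →₀ R), (∀ q, c q ∈ g (d - deg (i + 1) q)) →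
      ∀ p, D i c p ∈ g (d - deg i p))
    (hxg : ∀ k, ∀ r ∈ g' k, x * r ∈ g k)
    (hex : ∀ k, ∀ r ∈ g k, r ∈ I' → ∃ u ∈ g' k, r - x * u ∈ I)
    (hle : ∀ k, g k ≤ g'' k) (hsurj : ∀ k, ∀ r ∈ g'' k, ∃ s ∈ g k, s - r ∈ I')
    {i : ℕ} {d : ℤ} (h : Van deg D g I i d) (h' : ∀ j, i = j + 1 → Van deg D g' I j d) :
    Van deg D g'' I' i d := by
  intro c0 hc0 hcyc0
  obtain ⟨c, hc⟩ := finsupp_choose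
    (Q := fun q r s => s ∈ g (d - deg i q) ∧ s - r ∈ I')
    (fun q => ⟨zero_mem _, by simp⟩) c0 (fun q => by
      obtain ⟨s, hs, hs'⟩ := hsurj _ _ (hc0 q); exact ⟨s, hs, hs'⟩)
  have hcyc : Cyc D I' i c := hcyc0.congr le_rfl fun p => (hc p).2
  -- It is enough to lift `c`, up to a multiple of `x`, to a cycle modulo `I`.
  suffices ∃ f : Y i →₀ R, (∀ p, f p ∈ g (d - deg i p)) ∧ Cyc D I i f ∧
      ∀ p, (f - c) p ∈ I' by
    obtain ⟨f, hf, hfc, hfI⟩ := this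
    obtain ⟨b, hb, hbf⟩ := h f hf hfc
    refine ⟨b, fun q => hle _ (hb q), fun p => ?_⟩
    have h2 : (D i b - c0) p = (D i b - f) p + (f - c) p + (c p - c0 p) := by simp
    rw [h2]
    exact add_mem (add_mem (hII' (hbf p)) (hfI p)) (hc p).2
  cases i with
  | zero => exact ⟨c, fun p => (hc p).1, trivial, by simp⟩
  | succ i =>
    obtain ⟨e, he⟩ := finsupp_choose
      (Q := fun p r u => u ∈ g' (d - deg i p) ∧ r - x * u ∈ I)
      (fun p => ⟨zero_mem _, by simp⟩) (D i c) (fun p => by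
        obtain ⟨s, hs, hs'⟩ := hex _ _ (hpres i d c (fun q => (hc q).1) p) (hcyc p)
        exact ⟨s, hs, hs'⟩)
    have hecyc : Cyc D I i e := by
      refine Cyc.of_smul hx (Cyc.congr (c := D i c) le_rfl ?_ fun p => ?_)
      · cases i with
        | zero => trivial
        | succ i => intro p; rw [hDD]; simp
      · simpa using neg_mem (he p).2
    obtain ⟨e', he', hee⟩ := h' i rfl e (fun p => (he p).1) hecyc
    refine ⟨c - x • e', fun p => sub_mem (hc p).1 (hxg _ _ (he' p)), fun p => ?_, fun p => ?_⟩
    · have h1 := sub_mem (he p).2 (Ideal.mul_mem_left I x (hee p))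
      have h2 : (D i (c - x • e')) p = (D i c p - x * e p) - x * (D i e' - e) p := by
        simp; ring
      rw [h2]; exact h1
    · have h2 : (c - x • e' - c) p = - (x * e' p) := by simp
      rw [h2]
      exact neg_mem (Ideal.mul_mem_right _ _ hxI')

end Complex

/-! ### Linearity for the family of modules -/

section Family

/-- The degree `k` part of the module `⨁ₖ ∏ᵢ V_i ^ (a_i + k)`, enlarged by the ideal generated by
`W` so that its image modulo that ideal is the object of interest. -/
noncomputable def G (V : Fin m → Submodule L (MvPolynomial (Fin n) L))
    (W : Submodule L (MvPolynomial (Fin n) L)) (a : Fin m → ℕ) (k : ℤ) :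
    Submodule L (MvPolynomial (Fin n) L) :=
  (if 0 ≤ k then Vpow V (fun i => a i + k.toNat) else ⊥) ⊔ IW W

variable {V : Fin m → Submodule L (MvPolynomial (Fin n) L)}
  {W : Submodule L (MvPolynomial (Fin n) L)}

theorem G_of_neg (a : Fin m → ℕ) {k : ℤ} (hk : k < 0) : G V W a k = IW W := by
  simp [G, not_le.2 hk]

theorem G_natCast (a : Fin m → ℕ) (k : ℕ) :
    G V W a (k : ℤ) = Vpow V (fun i => a i + k) ⊔ IW W := by
  simp [G]

theorem IW_le_G (a : Fin m → ℕ) (k : ℤ) : IW W ≤ G V W a k := le_sup_right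

theorem G_mono {W' : Submodule L (MvPolynomial (Fin n) L)} (h : W ≤ W') (a : Fin m → ℕ) (k : ℤ) :
    G V W a k ≤ G V W' a k :=
  sup_le_sup_left (fun _ hr => idl_mono h hr) _

theorem G_shift (a : Fin m → ℕ) (k : ℕ) : G V W (1 + a) (k : ℤ) = G V W a ((k + 1 : ℕ) : ℤ) := by
  rw [G_natCast, G_natCast]
  congr 2
  funext i
  simp only [Pi.add_apply, Pi.one_apply]
  ring

/-- Enlarging `W` only passes to a quotient of the coefficient module. -/
theorem G_surj {W' : Submodule L (MvPolynomial (Fin n) L)} (a : Fin m → ℕ) (k : ℤ)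
    (r) (hr : r ∈ G V W' a k) : ∃ s ∈ G V W a k, s - r ∈ idl W' := by
  obtain ⟨v, hv, w, hw, rfl⟩ := Submodule.mem_sup.1 hr
  exact ⟨v, Submodule.mem_sup_left hv, by simpa using mem_IW.1 hw⟩

theorem G_mul {i : Fin m} {x} (hx : x ∈ V i) (a : Fin m → ℕ) (k : ℤ) (r) (hr : r ∈ G V W a k) :
    x * r ∈ G V W (Pi.single i 1 + a) k := by
  rcases lt_or_ge k 0 with hk | hk
  · rw [G_of_neg _ hk] at hr ⊢
    exact Ideal.mul_mem_left _ _ hr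
  · lift k to ℕ using hk
    rw [G_natCast] at hr ⊢
    obtain ⟨v, hv, w, hw, rfl⟩ := Submodule.mem_sup.1 hr
    rw [mul_add]
    refine add_mem (Submodule.mem_sup_left ?_)
      (Submodule.mem_sup_right (Ideal.mul_mem_left _ _ hw))
    have : (fun j => (Pi.single i 1 + a : Fin m → ℕ) j + k) = Pi.single i 1 + fun j => a j + k := by
      funext j; simp [add_assoc]
    rw [this, Vpow_add, Vpow_single]
    exact Submodule.mul_mem_mul hx hv

/-- Exactness in the middle of `0 → G(a) → G(e_i + a) → G(e_i + a) / (x) → 0`, modulo `(W)`. -/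
theorem G_exact {i : Fin m} {x}
    (hgen : ∀ (c : Fin m → ℕ), ∀ v ∈ Vpow V (Pi.single i 1 + c),
      v ∈ idl (W ⊔ Submodule.span L {x}) → ∃ u ∈ Vpow V c, v - x * u ∈ idl W)
    (a : Fin m → ℕ) (k : ℤ) (r) (hr : r ∈ G V W (Pi.single i 1 + a) k)
    (hr' : r ∈ idl (W ⊔ Submodule.span L {x})) : ∃ u ∈ G V W a k, r - x * u ∈ idl W := by
  rcases lt_or_ge k 0 with hk | hk
  · rw [G_of_neg _ hk] at hr
    exact ⟨0, zero_mem _, by simpa using mem_IW.1 hr⟩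
  · lift k to ℕ using hk
    rw [G_natCast] at hr
    obtain ⟨v, hv, w, hw, rfl⟩ := Submodule.mem_sup.1 hr
    have : (fun j => (Pi.single i 1 + a : Fin m → ℕ) j + k) = Pi.single i 1 + fun j => a j + k := by
      funext j; simp [add_assoc]
    rw [this] at hv
    obtain ⟨u, hu, hu'⟩ := hgen _ v hv
      ((Ideal.add_mem_iff_left _ (idl_mono le_sup_left hw)).1 hr')
    refine ⟨u, ?_, ?_⟩
    · rw [G_natCast]; exact Submodule.mem_sup_left hu
    · have := add_mem hu' hw
      convert this using 1; ring

theorem constantCoeff_of_mem_idl (hW : W ≤ homogeneousSubmodule (Fin n) L 1) {r}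
    (hr : r ∈ idl W) : constantCoeff r = 0 := by
  have : idl W ≤ RingHom.ker (constantCoeff (R := L) (σ := Fin n)) := by
    refine Ideal.span_le.2 fun w hw => ?_
    have h1 : w.IsHomogeneous 1 := hW hw
    simp only [SetLike.mem_coe, RingHom.mem_ker, constantCoeff_eq]
    by_contra h
    simpa using h1 h
  exact this hr

variable {Y : ℕ → Type*}

/-- Linearity of the homology with coefficients in `G V W a`, in homological degrees below `s`. -/
def Lin (deg : ∀ i, Y i → ℤ)
    (D : ∀ i, (Y (i + 1) →₀ MvPolynomial (Fin n) L) →ₗ[MvPolynomial (Fin n) L]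
      (Y i →₀ MvPolynomial (Fin n) L))
    (V : Fin m → Submodule L (MvPolynomial (Fin n) L))
    (s : ℕ) (W : Submodule L (MvPolynomial (Fin n) L)) (a : Fin m → ℕ) : Prop :=
  ∀ i < s, ∀ d : ℤ, d ≠ i → Van deg D (G V W a) (idl W) i d

variable {deg : ∀ i, Y i → ℤ}
  {D : ∀ i, (Y (i + 1) →₀ MvPolynomial (Fin n) L) →ₗ[MvPolynomial (Fin n) L]
      (Y i →₀ MvPolynomial (Fin n) L)}

/-- If some `V_i` with `a_i > 0` lies in `W`, the coefficient module is zero. -/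
theorem lin_of_le {i : Fin m} (hi : V i ≤ W) {a : Fin m → ℕ} (ha : 1 ≤ a i) (s : ℕ) :
    Lin deg D V s W a := by
  have h : ∀ k, G V W a k ≤ IW W := by
    intro k
    rcases lt_or_ge k 0 with hk | hk
    · rw [G_of_neg _ hk]
    · lift k to ℕ using hk
      rw [G_natCast]
      refine sup_le ?_ le_rfl
      have : (fun j => a j + k) = Pi.single i 1 + ((fun j => a j + k) - Pi.single i 1) := by
        rw [add_tsub_cancel_of_le]
        intro j
        by_cases hj : j = i
        · subst hj; simp; omega
        · simp [hj]
      rw [this, Vpow_add, Vpow_single, Submodule.mul_le]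
      exact fun v hv u _ => Ideal.mul_mem_right _ _ (mem_idl (hi hv))
  intro j _ d _ c hc _
  exact ⟨0, fun q => zero_mem _, fun p => by simpa using mem_IW.1 (h _ (hc p))⟩

/-- Linearity passes from `W` to `W + ⟨x⟩` in the case `a = 0`. -/
theorem lin_right (hV : ∀ i, V i ≤ homogeneousSubmodule (Fin n) L 1)
    (hDD : ∀ i c, D i (D (i + 1) c) = 0)
    (hpres : ∀ W a i d (c : Y (i + 1) →₀ MvPolynomial (Fin n) L),
      (∀ q, c q ∈ G V W a (d - deg (i + 1) q)) → ∀ p, D i c p ∈ G V W a (d - deg i p))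
    (hW : W ≤ homogeneousSubmodule (Fin n) L 1) {i : Fin m} {x} (hx : x ∈ V i) (hxW : x ∉ W)
    (hgen : ∀ (c : Fin m → ℕ), ∀ v ∈ Vpow V (Pi.single i 1 + c),
      v ∈ idl (W ⊔ Submodule.span L {x}) → ∃ u ∈ Vpow V c, v - x * u ∈ idl W)
    {s : ℕ} (h : Lin deg D V (s + 1) W 0) (h' : Lin deg D V s W (1 - Pi.single i 1)) :
    Lin deg D V (s + 1) (W ⊔ Submodule.span L {x}) 0 := by
  have h1 : (Pi.single i 1 : Fin m → ℕ) + (1 - Pi.single i 1) = 1 + 0 := by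
    rw [add_tsub_cancel_of_le, add_zero]
    intro j
    by_cases hj : j = i
    · subst hj; simp
    · simp [hj]
  have hW' : W ⊔ Submodule.span L {x} ≤ homogeneousSubmodule (Fin n) L 1 :=
    sup_le hW (by simpa using hV i hx)
  intro j hj d hd
  refine van_right hDD (g := G V W 0) (g' := fun k => G V W (1 - Pi.single i 1) (k - 1))
    (I := idl W) (x := x) (fun r => colon_idl hW (hV i hx) hxW) (idl_mono le_sup_left)
    (mem_idl (Submodule.mem_sup_right (Submodule.mem_span_singleton_self x)))
    (hpres W 0) ?_ ?_ (G_mono le_sup_left 0) (G_surj 0) (h j hj d hd) ?_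
  · intro k r hr
    rcases lt_or_ge (k - 1) 0 with hk | hk
    · rw [G_of_neg _ hk] at hr
      exact IW_le_G _ _ (Ideal.mul_mem_left _ _ hr)
    · obtain ⟨l, hl⟩ := Int.eq_ofNat_of_zero_le hk
      have := G_mul hx _ _ r hr
      rw [h1, hl, G_shift] at this
      rwa [show k = ((l + 1 : ℕ) : ℤ) by push_cast; omega]
  · intro k r hr hr'
    rcases lt_or_ge (k - 1) 0 with hk | hk
    · refine ⟨0, zero_mem _, ?_⟩
      rcases lt_or_ge k 0 with hk0 | hk0
      · rw [G_of_neg _ hk0] at hr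
        simpa using mem_IW.1 hr
      · -- In degree `0` the space `V ^ 0` consists of constants, and the ideal contains none.
        obtain rfl : k = ((0 : ℕ) : ℤ) := by push_cast; omega
        rw [G_natCast] at hr
        obtain ⟨v, hv, w, hw, rfl⟩ := Submodule.mem_sup.1 hr
        have hv1 : v ∈ (1 : Submodule L (MvPolynomial (Fin n) L)) := by
          simpa [Vpow] using hv
        obtain ⟨t, rfl⟩ := Submodule.mem_one.1 hv1
        have h2 := constantCoeff_of_mem_idl hW'
          ((Ideal.add_mem_iff_left _ (idl_mono le_sup_left hw)).1 hr')
        rw [algebraMap_eq, constantCoeff_C] at h2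
        simpa [h2] using mem_IW.1 hw
    · obtain ⟨l, hl⟩ := Int.eq_ofNat_of_zero_le hk
      refine G_exact hgen _ _ r ?_ hr'
      rw [h1, hl, G_shift]
      rwa [show k = ((l + 1 : ℕ) : ℤ) by push_cast; omega] at hr
  · rintro j' rfl c hc hcyc
    obtain ⟨c', hc', hc''⟩ := h' j' (by omega) (d - 1) (by push_cast at hd; omega) c
      (fun p => by rw [sub_right_comm]; exact hc p) hcyc
    exact ⟨c', fun q => by have := hc' q; rw [sub_right_comm] at this; exact this, hc''⟩

/-- Linearity for `a = 0` implies linearity for all `a`, by induction on the homological degree, the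
codimension of `W` and `∑ a_i`. -/
theorem lin_all [Infinite L] (hV : ∀ i, V i ≤ homogeneousSubmodule (Fin n) L 1)
    (hDD : ∀ i c, D i (D (i + 1) c) = 0)
    (hpres : ∀ W a i d (c : Y (i + 1) →₀ MvPolynomial (Fin n) L),
      (∀ q, c q ∈ G V W a (d - deg (i + 1) q)) → ∀ p, D i c p ∈ G V W a (d - deg i p))
    (s : ℕ) : ∀ W ≤ homogeneousSubmodule (Fin n) L 1, Lin deg D V s W 0 →
      ∀ a, Lin deg D V s W a := by
  induction s with
  | zero => intro W _ _ a i hi; omega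
  | succ s ih =>
    refine codim_induction fun W hW ihW h0 => ?_
    suffices ∀ N, ∀ a : Fin m → ℕ, ∑ i, a i = N → Lin deg D V (s + 1) W a from
      fun a => this _ a rfl
    intro N
    induction N with
    | zero =>
      intro a ha
      obtain rfl : a = 0 := by funext i; simpa using (Finset.sum_eq_zero_iff.1 ha) i
      exact h0
    | succ N ihN =>
      intro a ha
      obtain ⟨i, hi⟩ : ∃ i, 1 ≤ a i := by
        by_contra! hc
        have : ∑ i, a i = 0 := Finset.sum_eq_zero fun i _ => by have := hc i; omega
        omega
      by_cases hiW : V i ≤ W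
      · exact lin_of_le hiW hi _
      obtain ⟨x, hx, hxW, hgen⟩ := exists_generic hV hW i hiW
      have hW' : W ⊔ Submodule.span L {x} ≤ homogeneousSubmodule (Fin n) L 1 :=
        sup_le hW (by simpa using hV i hx)
      have hlt : W < W ⊔ Submodule.span L {x} := by
        refine lt_of_le_of_ne le_sup_left fun h => hxW ?_
        rw [h]
        exact Submodule.mem_sup_right (Submodule.mem_span_singleton_self x)
      have h1 : (Pi.single i 1 : Fin m → ℕ) + (a - Pi.single i 1) = a := by
        rw [add_tsub_cancel_of_le]
        intro j
        by_cases hj : j = i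
        · subst hj; simpa using hi
        · simp [hj]
      have hright : Lin deg D V (s + 1) (W ⊔ Submodule.span L {x}) 0 :=
        lin_right hV hDD hpres hW hx hxW hgen h0
          (ih W hW (fun j hj => h0 j (by omega)) _)
      have h'' := ihW _ hW' hlt hright a
      have h' := ihN (a - Pi.single i 1) (by
        have := congrArg (fun b : Fin m → ℕ => ∑ j, b j) h1
        simp only [Pi.add_apply, Finset.sum_add_distrib, Finset.sum_pi_single', Finset.mem_univ,
          if_true] at this
        simp at this ⊢
        omega)
      intro j hj d hd
      refine van_mid hDD (g' := G V W (a - Pi.single i 1)) (x := x)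
        (fun r => colon_idl hW (hV i hx) hxW) (idl_mono le_sup_left) (hpres W a) ?_ ?_
        (G_mono le_sup_left a) (G_surj a) (h' j hj d hd) (h'' j hj d hd)
      · intro k r hr
        have := G_mul hx _ _ r hr
        rwa [h1] at this
      · intro k r hr
        refine G_exact hgen _ _ r ?_
        rwa [h1]

end Family

/-! ### Base change of the resolution -/

section BaseChange

/-- Elements of the `L`-span of the image of a `K`-space `S` expand along a `K`-basis of `L` with
coefficients in `S`. -/
theorem exists_expansion {K : Type*} [Field K] [Algebra K L] {I : Type*} (bL : Module.Basis I K L)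
    {M N : Type*} [AddCommGroup M] [Module K M] [AddCommGroup N] [Module K N] [Module L N]
    [IsScalarTower K L N] (φ : M →ₗ[K] N) (S : Submodule K M) {z : N}
    (hz : z ∈ Submodule.span L (φ '' S)) :
    ∃ f : I →₀ M, (∀ b, f b ∈ S) ∧ z = ∑ b ∈ f.support, bL b • φ (f b) := by
  change ∃ f : I →₀ M, (∀ b, f b ∈ S) ∧ z = f.sum fun b x => bL b • φ x
  refine Submodule.closure_induction (p := fun z _ => ∃ f : I →₀ M, (∀ b, f b ∈ S) ∧
    z = f.sum fun b x => bL b • φ x) ?_ ?_ ?_ hz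
  · exact ⟨0, by simp, by simp⟩
  · rintro x y _ _ ⟨f, hf, rfl⟩ ⟨g, hg, rfl⟩
    refine ⟨f + g, fun b => add_mem (hf b) (hg b), ?_⟩
    rw [Finsupp.sum_add_index'] <;> simp
  · rintro l _ ⟨x, hx, rfl⟩
    refine ⟨(bL.repr l).mapRange (fun a => a • x) (zero_smul _ _), fun b => ?_, ?_⟩
    · simpa using S.smul_mem _ hx
    · rw [Finsupp.sum_mapRange_index (by simp)]
      conv_lhs => rw [← bL.linearCombination_repr l, Finsupp.linearCombination_apply]
      simp only [Finsupp.sum, Finset.sum_smul, map_smul]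
      refine Finset.sum_congr rfl fun b _ => ?_
      rw [smul_assoc, smul_comm]

variable {K : Type u} [Field K] {B : Type u} [CommRing B] [Algebra K B] {A : StdGrading K B}

theorem one_mem_gr (A : StdGrading K B) : (1 : B) ∈ A.gr 0 := by
  rw [A.zeroEq]; exact Submodule.mem_span_singleton_self 1

theorem single_mem_freeGr {β : ℕ → ℤ → ℕ} {i : ℕ} (q : (j : ℤ) × Fin (β i j)) {l d : ℤ} {b : B}
    (hb : b ∈ A.gr l) (hd : l + q.1 = d) : Finsupp.single q b ∈ freeGr A β i d := by
  classical
  intro p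
  rw [Finsupp.single_apply]
  split_ifs with h
  · subst h; rwa [← hd, add_sub_cancel_right]
  · exact zero_mem _

/-- The projections onto the homogeneous components. -/
theorem exists_gradedProj (A : StdGrading K B) :
    ∃ π : ℤ → B →ₗ[K] B, (∀ k, ∀ x ∈ A.gr k, π k x = x) ∧
      ∀ k l, l ≠ k → ∀ x ∈ A.gr l, π k x = 0 := by
  let e := LinearEquiv.ofBijective (DirectSum.coeLinearMap A.gr) A.internal
  have he : ∀ l (x : B) (hx : x ∈ A.gr l),
      e.symm x = DirectSum.lof K ℤ (fun i => A.gr i) l ⟨x, hx⟩ := by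
    intro l x hx
    rw [LinearEquiv.symm_apply_eq]
    exact (DirectSum.coeLinearMap_lof A.gr l ⟨x, hx⟩).symm
  refine ⟨fun k => (A.gr k).subtype ∘ₗ DirectSum.component K ℤ (fun i => A.gr i) k ∘ₗ
    e.symm.toLinearMap, fun k x hx => ?_, fun k l hl x hx => ?_⟩
  · simp [he k x hx, DirectSum.component.lof_self]
  · simp [he l x hx, DirectSum.component.of, hl]

variable {M : Type u} [AddCommGroup M] [Module K M] [Module B M] [IsScalarTower K B M]
  {g : ℤ → Submodule K M} {β : ℕ → ℤ → ℕ}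

/-- A homogeneous boundary is the boundary of a homogeneous chain. -/
theorem exists_graded_lift (F : MinFreeRes A g β) {i : ℕ} {d : ℤ} (h : FreeMod B β (i + 1))
    (hf : F.d i h ∈ freeGr A β i d) : ∃ h' ∈ freeGr A β (i + 1) d, F.d i h' = F.d i h := by
  obtain ⟨π, h1, h2⟩ := exists_gradedProj A
  suffices ∃ h' ∈ freeGr A β (i + 1) d, ∀ p, π (d - p.1) (F.d i h p) = F.d i h' p by
    obtain ⟨h', hh', hp⟩ := this
    refine ⟨h', hh', Finsupp.ext fun p => ?_⟩
    rw [← hp p, h1 _ _ (hf p)]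
  clear hf
  induction h using Finsupp.induction_linear with
  | zero => exact ⟨0, zero_mem _, by simp⟩
  | add x y hx hy =>
    obtain ⟨x', hx', hx''⟩ := hx
    obtain ⟨y', hy', hy''⟩ := hy
    exact ⟨x' + y', add_mem hx' hy', fun p => by simp [hx'', hy'']⟩
  | single q b =>
    have hb : b ∈ ⨆ k, A.gr k := by rw [A.internal.submodule_iSup_eq_top]; trivial
    induction hb using Submodule.iSup_induction' with
    | mem l b hb =>
      by_cases hl : l + q.1 = d
      · have hq := single_mem_freeGr q hb hl
        exact ⟨_, hq, fun p => h1 _ _ (F.graded_d i d _ hq p)⟩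
      · refine ⟨0, zero_mem _, fun p => ?_⟩
        rw [h2 _ (l + q.1 - p.1) (by omega) _ (F.graded_d i _ _ (single_mem_freeGr q hb rfl) p)]
        simp
    | zero => exact ⟨0, zero_mem _, by simp⟩
    | add x y _ _ hx hy =>
      obtain ⟨x', hx', hx''⟩ := hx
      obtain ⟨y', hy', hy''⟩ := hy
      exact ⟨x' + y', add_mem hx' hy', fun p => by simp [Finsupp.single_add, hx'', hy'']⟩

variable [Algebra K L]

/-- The coordinatewise extension of `j` to free modules. -/
noncomputable def extend (j : B →ₐ[K] MvPolynomial (Fin n) L) (Y : Type*) :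
    (Y →₀ B) →ₗ[K] (Y →₀ MvPolynomial (Fin n) L) :=
  Finsupp.mapRange.linearMap j.toLinearMap

@[simp] theorem extend_apply (j : B →ₐ[K] MvPolynomial (Fin n) L) {Y : Type*} (f : Y →₀ B) (p : Y) :
    extend j Y f p = j (f p) := by simp [extend]

/-- The differentials of a resolution over `B`, base changed along `j`. -/
noncomputable def bcD (F : MinFreeRes A g β) (j : B →ₐ[K] MvPolynomial (Fin n) L) (i : ℕ) :
    ((((k : ℤ) × Fin (β (i + 1) k)) →₀ MvPolynomial (Fin n) L)) →ₗ[MvPolynomial (Fin n) L]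
      (((k : ℤ) × Fin (β i k)) →₀ MvPolynomial (Fin n) L) :=
  Finsupp.linearCombination _ fun q => extend j _ (F.d i (Finsupp.single q 1))

theorem bcD_extend (F : MinFreeRes A g β) (j : B →ₐ[K] MvPolynomial (Fin n) L) (i : ℕ)
    (f : FreeMod B β (i + 1)) : bcD F j i (extend j _ f) = extend j _ (F.d i f) := by
  induction f using Finsupp.induction_linear with
  | zero => simp
  | add x y hx hy => simp [hx, hy]
  | single q b =>
    have h1 : extend j _ (Finsupp.single q b) = Finsupp.single q (j b) := by
      simp [extend]
    have h2 : Finsupp.single q b = b • Finsupp.single q (1 : B) := by simp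
    rw [h1, bcD, Finsupp.linearCombination_single, h2, map_smul]
    ext1 p
    simp

theorem bcD_apply (F : MinFreeRes A g β) (j : B →ₐ[K] MvPolynomial (Fin n) L) (i : ℕ) (c) (p) :
    bcD F j i c p = c.sum fun q r => r * j (F.d i (Finsupp.single q 1) p) := by
  rw [bcD, Finsupp.linearCombination_apply, Finsupp.sum, Finsupp.finsetSum_apply]
  simp [Finsupp.sum]

theorem bcD_bcD (F : MinFreeRes A g β) (j : B →ₐ[K] MvPolynomial (Fin n) L) (i : ℕ) (c) :
    bcD F j i (bcD F j (i + 1) c) = 0 := by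
  induction c using Finsupp.induction_linear with
  | zero => simp
  | add x y hx hy => simp [hx, hy]
  | single q r =>
    have h : bcD F j (i + 1) (Finsupp.single q r) =
        r • extend j _ (F.d (i + 1) (Finsupp.single q 1)) := by
      rw [bcD, Finsupp.linearCombination_single]
    rw [h, map_smul, bcD_extend, (F.exact_d i).apply_apply_eq_zero]
    simp

variable {V : Fin m → Submodule L (MvPolynomial (Fin n) L)}

/-- The base changed differentials respect the internal grading with coefficients in `G V W a`. -/
theorem bcD_pres (F : MinFreeRes A g β) (j : B →ₐ[K] MvPolynomial (Fin n) L)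
    (hspan : ∀ k : ℕ, Submodule.span L (j '' A.gr k) = Vpow V fun _ => k)
    (W : Submodule L (MvPolynomial (Fin n) L)) (a : Fin m → ℕ) (i : ℕ) (d : ℤ)
    (c : ((k : ℤ) × Fin (β (i + 1) k)) →₀ MvPolynomial (Fin n) L)
    (hc : ∀ q, c q ∈ G V W a (d - q.1)) (p) : bcD F j i c p ∈ G V W a (d - p.1) := by
  have key : ∀ (k l : ℤ), ∀ b ∈ A.gr k, ∀ r ∈ G V W a l, r * j b ∈ G V W a (l + k) := by
    intro k l b hb r hr
    rcases lt_or_ge k 0 with hk | hk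
    · rw [A.negBot k hk, Submodule.mem_bot] at hb
      simp [hb]
    rcases lt_or_ge l 0 with hl | hl
    · rw [G_of_neg _ hl] at hr
      exact IW_le_G _ _ (Ideal.mul_mem_right _ _ hr)
    lift k to ℕ using hk
    lift l to ℕ using hl
    rw [← Nat.cast_add]
    rw [G_natCast] at hr ⊢
    obtain ⟨v, hv, w, hw, rfl⟩ := Submodule.mem_sup.1 hr
    rw [add_mul]
    refine add_mem (Submodule.mem_sup_left ?_)
      (Submodule.mem_sup_right (Ideal.mul_mem_right _ _ hw))
    have h1 : (fun x => a x + (l + k)) = (fun x => a x + l) + fun _ => k := by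
      funext x; simp [add_assoc]
    rw [h1, Vpow_add, ← hspan]
    exact Submodule.mul_mem_mul hv (Submodule.subset_span ⟨b, hb, rfl⟩)
  rw [bcD_apply]
  refine sum_mem fun q _ => ?_
  have h1 := F.graded_d i _ _ (single_mem_freeGr q (one_mem_gr A) rfl) p
  have h2 := key _ _ _ h1 _ (hc q)
  rwa [show d - q.1 + (0 + q.1 - p.1) = d - p.1 by ring] at h2

theorem G_bot_eq {j : B →ₐ[K] MvPolynomial (Fin n) L}
    (hspan : ∀ k : ℕ, Submodule.span L (j '' A.gr k) = Vpow V fun _ => k) (k : ℤ) :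
    G V ⊥ 0 k = Submodule.span L (j '' A.gr k) := by
  have h0 : IW (⊥ : Submodule L (MvPolynomial (Fin n) L)) = ⊥ := by
    ext r; rw [mem_IW, idl_bot]; simp
  rcases lt_or_ge k 0 with hk | hk
  · rw [G_of_neg _ hk, A.negBot k hk, h0]; simp
  · lift k to ℕ using hk
    rw [G_natCast, hspan, h0]; simp

theorem mem_span_extend (j : B →ₐ[K] MvPolynomial (Fin n) L) {i : ℕ} {d : ℤ}
    (c : ((k : ℤ) × Fin (β i k)) →₀ MvPolynomial (Fin n) L)
    (hc : ∀ p, c p ∈ Submodule.span L (j '' A.gr (d - p.1))) :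
    c ∈ Submodule.span L (extend j _ '' (freeGr A β i d : Set (FreeMod B β i))) := by
  rw [← Finsupp.sum_single c]
  refine sum_mem fun p _ => ?_
  have h1 : Finsupp.lsingle (R := L) p (c p) ∈
      (Submodule.span L (j '' A.gr (d - p.1))).map (Finsupp.lsingle (R := L) p) :=
    Submodule.mem_map_of_mem (hc p)
  rw [Submodule.map_span] at h1
  refine Submodule.span_mono ?_ h1
  rintro _ ⟨_, ⟨b, hb, rfl⟩, rfl⟩
  exact ⟨Finsupp.single p b, single_mem_freeGr p hb (by ring), by simp [extend]⟩

/-- The case `W = 0`, `a = 0`: the coefficient module is the algebra itself with scalars extended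
to `L`, so the homology is the residue field in homological and internal degree zero. The hypothesis
`hind` says that `j` extends to an injection of `L ⊗ B`. -/
theorem lin_base {I : Type*} (bL : Module.Basis I K L) (F : MinFreeRes A (resGr A) β)
    (j : B →ₐ[K] MvPolynomial (Fin n) L)
    (hspan : ∀ k : ℕ, Submodule.span L (j '' A.gr k) = Vpow V fun _ => k)
    (hind : ∀ (s : Finset I) (r : I → B), ∑ b ∈ s, bL b • j (r b) = 0 → ∀ b ∈ s, r b = 0)
    (s : ℕ) : Lin (fun i (p : (k : ℤ) × Fin (β i k)) => p.1) (bcD F j) V s ⊥ 0 := by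
  intro i _ d hd c hc hcyc
  simp only [G_bot_eq hspan] at hc ⊢
  obtain ⟨f, hf, hcf⟩ := exists_expansion bL _ _ (mem_span_extend j c hc)
  suffices ∀ b ∈ f.support, ∃ h ∈ freeGr A β (i + 1) d, F.d i h = f b by
    choose! h hh hhf using this
    refine ⟨∑ b ∈ f.support, bL b • extend j _ (h b), fun q => ?_, fun p => ?_⟩
    · rw [Finsupp.finsetSum_apply]
      refine sum_mem fun b hb => Submodule.smul_mem _ _ (Submodule.subset_span ⟨h b q, hh b hb q, ?_⟩)
      simp
    · have : bcD F j i (∑ b ∈ f.support, bL b • extend j _ (h b)) = c := by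
        rw [hcf, map_sum]
        refine Finset.sum_congr rfl fun b hb => ?_
        rw [LinearMap.map_smul_of_tower, bcD_extend, hhf b hb]
      rw [this]; simp
  intro b hb
  suffices ∃ h, F.d i h = f b by
    obtain ⟨h, hh⟩ := this
    rw [← hh]
    exact exists_graded_lift F h (by rw [hh]; exact hf b)
  cases i with
  | zero =>
    refine (F.exact_eps (f b)).1 ?_
    have h1 := F.graded_eps d _ (hf b)
    obtain ⟨x, hx, hx'⟩ := h1
    rw [← hx']
    rcases lt_or_gt_of_ne hd with hd | hd
    · rw [A.negBot d (by simpa using hd)] at hx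
      rw [(Submodule.mem_bot K).1 hx, map_zero]
    · simp only [LinearMap.restrictScalars_apply, Submodule.mkQ_apply]
      rw [Submodule.Quotient.mk_eq_zero]
      exact Ideal.subset_span ⟨d, by simpa using hd, hx⟩
  | succ i =>
    refine (F.exact_d i (f b)).1 (Finsupp.ext fun p => ?_)
    refine hind f.support (fun b => F.d i (f b) p) ?_ b hb
    have h1 := hcyc p
    rw [idl_bot, Ideal.mem_bot, hcf, map_sum, Finsupp.finsetSum_apply] at h1
    rw [← h1]
    refine Finset.sum_congr rfl fun b _ => ?_
    rw [LinearMap.map_smul_of_tower, bcD_extend]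
    simp

end BaseChange

/-! ### Conclusion -/

section Final

variable {K : Type u} [Field K] {B : Type u} [CommRing B] [Algebra K B] {A : StdGrading K B}
  {β : ℕ → ℤ → ℕ} [Algebra K L] {V : Fin m → Submodule L (MvPolynomial (Fin n) L)}

/-- Extension of scalars of a space of polynomials, as a multiplicative map. -/
noncomputable def spanMap (K L : Type u) [Field K] [Field L] [Algebra K L] (n : ℕ) :
    Submodule K (MvPolynomial (Fin n) K) →* Submodule L (MvPolynomial (Fin n) L) where
  toFun S := Submodule.span L (mapAlgHom (Algebra.ofId K L) '' S)
  map_one' := by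
    rw [Submodule.one_eq_span, Submodule.one_eq_span]
    refine le_antisymm (Submodule.span_le.2 ?_) (Submodule.span_mono ?_)
    · rintro _ ⟨x, hx, rfl⟩
      obtain ⟨t, rfl⟩ := Submodule.mem_span_singleton.1 hx
      rw [map_smul, map_one, algebra_compatible_smul L]
      exact Submodule.smul_mem _ _ (Submodule.mem_span_singleton_self 1)
    · rintro _ rfl
      exact ⟨1, Submodule.mem_span_singleton_self 1, map_one _⟩
  map_mul' S T := by
    rw [Submodule.span_mul_span]
    refine le_antisymm (Submodule.span_le.2 ?_) (Submodule.span_mono ?_)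
    · rintro _ ⟨x, hx, rfl⟩
      induction hx using Submodule.mul_induction_on' with
      | mem_mul_mem a ha b hb =>
        rw [map_mul]
        exact Submodule.subset_span (Set.mul_mem_mul ⟨a, ha, rfl⟩ ⟨b, hb, rfl⟩)
      | add a _ b _ ha hb => rw [map_add]; exact add_mem ha hb
    · rintro _ ⟨_, ⟨a, ha, rfl⟩, _, ⟨b, hb, rfl⟩, rfl⟩
      exact ⟨a * b, Submodule.mul_mem_mul ha hb, map_mul _ _ _⟩

theorem constantCoeff_maxIdeal {j : B →ₐ[K] MvPolynomial (Fin n) L}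
    (hV : ∀ i, V i ≤ homogeneousSubmodule (Fin n) L 1) (hm : 0 < m)
    (hspan : ∀ k : ℕ, Submodule.span L (j '' A.gr k) = Vpow V fun _ => k) {x : B}
    (hx : x ∈ A.maxIdeal) : constantCoeff (j x) = 0 := by
  have : A.maxIdeal ≤ RingHom.ker ((constantCoeff (R := L) (σ := Fin n)).comp j.toRingHom) := by
    refine Ideal.span_le.2 ?_
    rintro y ⟨k, hk, hy⟩
    lift k to ℕ using hk.le
    have h1 : j y ∈ Vpow V fun _ => k := by
      rw [← hspan]; exact Submodule.subset_span ⟨y, hy, rfl⟩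
    have h2 : (j y).IsHomogeneous _ := Vpow_hom hV _ h1
    simp only [SetLike.mem_coe, RingHom.mem_ker, RingHom.comp_apply]
    change constantCoeff (j y) = 0
    rw [constantCoeff_eq]
    by_contra h
    have h3 := h2 h
    simp at h3
    omega
  exact this hx

/-- Linearity of the homology with coefficients in all the modules `G V ⊥ a` forces the minimal
resolution to be linear. -/
theorem betti_eq_zero [Infinite L] {I : Type*} (bL : Module.Basis I K L)
    (F : MinFreeRes A (resGr A) β) (j : B →ₐ[K] MvPolynomial (Fin n) L)
    (hV : ∀ i, V i ≤ homogeneousSubmodule (Fin n) L 1) (hm : 0 < m)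
    (hspan : ∀ k : ℕ, Submodule.span L (j '' A.gr k) = Vpow V fun _ => k)
    (hind : ∀ (s : Finset I) (r : I → B), ∑ b ∈ s, bL b • j (r b) = 0 → ∀ b ∈ s, r b = 0)
    (i : ℕ) (t : ℤ) (ht : t ≠ i) : β i t = 0 := by
  classical
  by_contra hβ
  have hlin := lin_all (Y := fun i => (k : ℤ) × Fin (β i k)) (deg := fun i p => p.1)
    (D := bcD F j) hV (bcD_bcD F j) (bcD_pres F j hspan) (i + 1) ⊥ bot_le
    (lin_base bL F j hspan hind (i + 1))
  let p0 : (k : ℤ) × Fin (β i k) := ⟨t, ⟨0, Nat.pos_of_ne_zero hβ⟩⟩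
  let c : ((k : ℤ) × Fin (β i k)) →₀ MvPolynomial (Fin n) L := Finsupp.single p0 1
  have hbot : ∀ {r : MvPolynomial (Fin n) L}, r ∈ idl ⊥ → r = 0 := by
    intro r hr; rwa [idl_bot, Ideal.mem_bot] at hr
  have hc : ∀ p, c p ∈ G V ⊥ 0 (t - p.1) := by
    intro p
    rw [G_bot_eq hspan]
    by_cases hp : p0 = p
    · subst hp
      simp only [c, Finsupp.single_eq_same]
      refine Submodule.subset_span ⟨1, ?_, map_one j⟩
      simpa [p0] using one_mem_gr A
    · simp [c, hp]
  -- It is enough to correct `c` to a cycle by a chain vanishing at `p0`: that cycle is then a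
  -- boundary, and by minimality boundaries have no constant terms.
  suffices ∃ e : ((k : ℤ) × Fin (β i k)) →₀ MvPolynomial (Fin n) L, e p0 = 0 ∧
      (∀ p, e p ∈ G V ⊥ 0 (t - p.1)) ∧ Cyc (Y := fun i => (k : ℤ) × Fin (β i k)) (bcD F j) (idl ⊥) i (c - e) by
    obtain ⟨e, he0, he, hcyc⟩ := this
    obtain ⟨c', -, h2⟩ := hlin 0 i (by omega) t ht (c - e) (fun p => sub_mem (hc p) (he p)) hcyc
    have h3 := hbot (h2 p0)
    simp only [Finsupp.sub_apply, he0, sub_zero, c, Finsupp.single_eq_same, sub_eq_zero] at h3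
    have h4 : constantCoeff (bcD F j i c' p0) = 0 := by
      rw [bcD_apply, Finsupp.sum, map_sum]
      refine Finset.sum_eq_zero fun q _ => ?_
      rw [map_mul, constantCoeff_maxIdeal hV hm hspan (F.minimal i _ p0), mul_zero]
    rw [h3, map_one] at h4
    exact one_ne_zero h4
  cases i with
  | zero => exact ⟨0, rfl, fun p => zero_mem _, trivial⟩
  | succ i =>
    have hDc : bcD F j i c = extend j _ (F.d i (Finsupp.single p0 1)) := by
      simp only [c, bcD]
      rw [Finsupp.linearCombination_single, one_smul]
    -- By minimality the boundary of `c` has coefficients in positive degree, that is, in the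
    -- module with `a = 1`, whose homology is linear as well.
    have hDg : ∀ p, bcD F j i c p ∈ G V ⊥ 1 (t - 1 - p.1) := by
      intro p
      rw [hDc, extend_apply]
      have h1 := F.graded_d i t _ (single_mem_freeGr p0 (one_mem_gr A) (zero_add _)) p
      have h2 := F.minimal i (Finsupp.single p0 1) p
      have h5 := constantCoeff_maxIdeal hV hm hspan h2
      generalize F.d i (Finsupp.single p0 1) p = y at h1 h5
      rcases lt_trichotomy (t - p.1) 0 with hk | hk | hk
      · rw [A.negBot _ hk, Submodule.mem_bot] at h1
        simp [h1]
      · rw [hk, A.zeroEq] at h1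
        obtain ⟨z, rfl⟩ := Submodule.mem_span_singleton.1 h1
        rw [map_smul, map_one, algebra_compatible_smul L, MvPolynomial.smul_eq_C_mul, mul_one,
          constantCoeff_C] at h5
        have h6 : z = 0 := (map_eq_zero (algebraMap K L)).1 h5
        simp [h6]
      · obtain ⟨l, hl⟩ := Int.eq_ofNat_of_zero_le (show 0 ≤ t - 1 - p.1 by omega)
        have h6 := G_shift (V := V) (W := ⊥) 0 l
        rw [add_zero] at h6
        rw [hl, h6, G_bot_eq hspan]
        refine Submodule.subset_span ⟨y, ?_, rfl⟩
        rwa [show ((l + 1 : ℕ) : ℤ) = t - p.1 by push_cast; omega]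
    obtain ⟨e, he, heD⟩ := hlin 1 i (by omega) (t - 1) (by push_cast at ht; omega) (bcD F j i c)
      hDg (by
        cases i with
        | zero => trivial
        | succ i => intro p; rw [bcD_bcD]; simp)
    refine ⟨e, ?_, fun p => ?_, fun p => ?_⟩
    · have := he p0
      rw [G_of_neg _ (by simp [p0])] at this
      exact hbot this
    · have h1 := he p
      rcases lt_or_ge (t - 1 - p.1) 0 with hk | hk
      · rw [G_of_neg _ hk] at h1
        exact IW_le_G _ _ h1
      · obtain ⟨l, hl⟩ := Int.eq_ofNat_of_zero_le hk
        have h6 := G_shift (V := V) (W := ⊥) 0 l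
        rw [add_zero] at h6
        rw [show t - p.1 = ((l + 1 : ℕ) : ℤ) by push_cast; omega, ← h6]
        rwa [hl] at h1
    · have h1 := hbot (heD p)
      rw [map_sub, Finsupp.sub_apply, ← neg_sub, ← Finsupp.sub_apply, h1]
      simp

end Final

end ProdLin

open ProdLin in
/-- Let `V_1,…,V_m` be subspaces of the space of linear forms of `R = K[x_1,…,x_n]`,
and let `A(V)` be the standard graded `K`-subalgebra of `R` generated (in degree one)
by the product space `V_1⋯V_m`, realized by `(B, Bgr, ι)`. Then `A(V)` is Koszul. -/
theorem stmt17 {K : Type u} [Field K] {n m : ℕ}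
    (V : Fin m → Submodule K (MvPolynomial (Fin n) K))
    (hV : ∀ i, V i ≤ MvPolynomial.homogeneousSubmodule (Fin n) K 1)
    (B : Type u) [CommRing B] [Algebra K B] (Bgr : StdGrading K B)
    (ι : B →ₐ[K] MvPolynomial (Fin n) K) (hinj : Function.Injective ι)
    (hgr : ∀ j : ℕ, (Bgr.gr (j : ℤ)).map (ι.toLinearMap : B →ₗ[K] _) =
      (∏ i, V i) ^ j) :
    IsKoszul Bgr := by
  rintro β ⟨F⟩ i t ht
  let L := AlgebraicClosure K
  have : Infinite L := IsAlgClosed.instInfinite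
  let bL := Module.Basis.ofVectorSpace K L
  let j : B →ₐ[K] MvPolynomial (Fin n) L := (MvPolynomial.mapAlgHom (Algebra.ofId K L)).comp ι
  have hm : 0 < m := by
    rcases Nat.eq_zero_or_pos m with rfl | hm
    · -- For the empty product the degree `0` and degree `1` parts would coincide.
      exfalso
      have h0 := hgr 0
      have h1 := hgr 1
      simp only [Finset.univ_eq_empty, Finset.prod_empty, one_pow] at h0 h1
      have h2 := Submodule.map_injective_of_injective (f := ι.toLinearMap) hinj (h0.trans h1.symm)
      have h3 := Bgr.internal.submodule_iSupIndep.pairwiseDisjoint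
        (show ((0 : ℕ) : ℤ) ≠ ((1 : ℕ) : ℤ) by simp)
      have h4 : (1 : B) = 0 := by
        refine (Submodule.disjoint_def.1 h3) 1 (one_mem_gr Bgr) ?_
        rw [← h2]
        exact one_mem_gr Bgr
      have h5 := congrArg ι h4
      rw [map_one, map_zero] at h5
      exact one_ne_zero h5
    · exact hm
  refine betti_eq_zero (V := fun i => spanMap K L n (V i)) bL F j ?_ hm ?_ ?_ i t ht
  · intro i
    refine Submodule.span_le.2 ?_
    rintro _ ⟨x, hx, rfl⟩
    exact MvPolynomial.IsHomogeneous.map (hV i hx) _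
  · intro k
    have h1 : Vpow (fun i => spanMap K L n (V i)) (fun _ => k) =
        spanMap K L n ((∏ i, V i) ^ k) := by
      simp [Vpow, Finset.prod_pow]
    rw [h1, ← hgr]
    change Submodule.span L (j '' Bgr.gr k) = Submodule.span L
      (MvPolynomial.mapAlgHom (Algebra.ofId K L) '' (ι.toLinearMap '' Bgr.gr k))
    rw [Set.image_image]
    rfl
  · intro s r h b hb
    refine hinj ?_
    rw [map_zero]
    ext μ
    rw [MvPolynomial.coeff_zero]
    refine linearIndependent_iff'.1 bL.linearIndependent s (fun b => (ι (r b)).coeff μ) ?_ b hb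
    have h1 := congrArg (MvPolynomial.coeff μ) h
    rw [MvPolynomial.coeff_sum, MvPolynomial.coeff_zero] at h1
    rw [← h1]
    refine Finset.sum_congr rfl fun b _ => ?_
    have h2 : (j (r b)).coeff μ = algebraMap K L ((ι (r b)).coeff μ) :=
      MvPolynomial.coeff_map _ _ _
    rw [MvPolynomial.coeff_smul, h2, Algebra.smul_def, smul_eq_mul, mul_comm]
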